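/- Let X be a real Banach space, S ⊆ X, and let P be a Borel probability measure on S of growth order s0 ∈ [0,∞). Then for every s > s0 and every codec C = (E_R, D_R)_{R∈ℕ} for S, the approximation class A^s(C) = {x ∈ S : sup_{R∈ℕ} R^s·‖x − D_R(E_R(x))‖ < ∞} satisfies P*(A^s(C)) = 0. -/

import Mathlib

open MeasureTheory Metric Set ENNReal

noncomputable section

variable {X : Type*}

/-- `CompressibleAt S s`: there is a codec `(E_R, D_R)_{R ∈ ℕ}` for `S` with
`sup_{R ∈ ℕ} R^s · δ(E_R, D_R) < ∞`. -/
def CompressibleAt [NormedAddCommGroup X] (S : Set X) (s : ℝ) : Prop :=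
  ∃ (E : (R : ℕ) → S → (Fin R → Bool)) (D : (R : ℕ) → (Fin R → Bool) → X) (K : ℝ),
    ∀ R : ℕ, 0 < R → ∀ x : S, (R : ℝ) ^ s * ‖(x : X) - D R (E R x)‖ ≤ K

/-- The optimal compression rate `s*(S, X) ∈ [0,∞]`. -/
def optRate [NormedAddCommGroup X] (S : Set X) : ℝ≥0∞ :=
  sSup (ENNReal.ofReal '' {s : ℝ | 0 ≤ s ∧ CompressibleAt S s})

/-- The approximation class `A^s(C)` of a codec `C = (E, D)`. -/
def approxClass [NormedAddCommGroup X] (S : Set X)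
    (E : (R : ℕ) → S → (Fin R → Bool)) (D : (R : ℕ) → (Fin R → Bool) → X)
    (s : ℝ) : Set S :=
  {x : S | ∃ K : ℝ, ∀ R : ℕ, 0 < R → (R : ℝ) ^ s * ‖(x : X) - D R (E R x)‖ ≤ K}

/-- `P` has (logarithmic) growth order `s₀`. -/
def HasGrowthOrder [NormedAddCommGroup X] [MeasurableSpace X] (S : Set X)
    (P : Measure S) (s₀ : ℝ) : Prop :=
  ∀ s : ℝ, s₀ < s → ∃ ε₀ c : ℝ, 0 < ε₀ ∧ 0 < c ∧
    ∀ (x : X) (ε : ℝ), 0 < ε → ε < ε₀ →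
      P {y : S | (y : X) ∈ Metric.closedBall x ε} ≤
        ENNReal.ofReal ((2 : ℝ) ^ (-(c * ε ^ (-(1 : ℝ) / s))))

open Filter Topology

/-- For `a > 0` and `p > 1` the sequence `2 ^ (R - a * R ^ p)` tends to `0`. -/
lemma tendsto_two_rpow_sub_mul_rpow {a p : ℝ} (ha : 0 < a) (hp : 1 < p) :
    Tendsto (fun R : ℕ => (2 : ℝ) ^ ((R : ℝ) - a * (R : ℝ) ^ p)) atTop (𝓝 0) := by
  have hR : Tendsto (fun R : ℕ => (R : ℝ)) atTop atTop := tendsto_natCast_atTop_atTop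
  have hpow : Tendsto (fun R : ℕ => a * (R : ℝ) ^ (p - 1) + (-1)) atTop atTop :=
    tendsto_atTop_add_const_right _ _
      (((tendsto_rpow_atTop (sub_pos.2 hp)).comp hR).const_mul_atTop ha)
  have hexp : Tendsto (fun R : ℕ => (R : ℝ) - a * (R : ℝ) ^ p) atTop atBot := by
    refine (tendsto_neg_atTop_atBot.comp (hR.atTop_mul_atTop₀ hpow)).congr' ?_
    filter_upwards [eventually_gt_atTop 0] with R hRpos
    have hRpos' : (0 : ℝ) < R := Nat.cast_pos.2 hRpos
    have hsplit : (R : ℝ) ^ p = R * (R : ℝ) ^ (p - 1) := by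
      rw [Real.rpow_sub_one hRpos'.ne']
      field_simp
    simp only [Function.comp_apply, hsplit]
    ring
  exact (tendsto_rpow_atBot_of_base_gt_one 2 one_lt_two).comp hexp

/-- A set reproduced up to `r` by an encoding/decoding pair of code-length `R` has measure
at most `2 ^ R` times any uniform bound on the measure of balls of radius `r`. -/
lemma measure_le_two_pow_mul_of_codec [NormedAddCommGroup X] [MeasurableSpace X] {S : Set X}
    (P : Measure S) {R : ℕ} (E : S → (Fin R → Bool)) (D : (Fin R → Bool) → X) {A : Set S}
    {r : ℝ} {b : ℝ≥0∞} (hA : ∀ x ∈ A, ‖(x : X) - D (E x)‖ ≤ r)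
    (hb : ∀ x : X, P {y : S | (y : X) ∈ closedBall x r} ≤ b) :
    P A ≤ 2 ^ R * b := by
  have hsub : A ⊆ ⋃ w : Fin R → Bool, {y : S | (y : X) ∈ closedBall (D w) r} := fun x hx =>
    mem_iUnion.2 ⟨E x, by simpa [mem_closedBall, dist_eq_norm] using hA x hx⟩
  calc P A ≤ ∑ w : Fin R → Bool, P {y : S | (y : X) ∈ closedBall (D w) r} :=
        (measure_mono hsub).trans (measure_iUnion_fintype_le _ _)
    _ ≤ ∑ _w : Fin R → Bool, b := Finset.sum_le_sum fun w _ => hb _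
    _ = 2 ^ R * b := by simp

/-- Under growth order `s₀ < s`, points with a fixed approximation constant form a null set. -/
lemma HasGrowthOrder.measure_eq_zero_of_bound [NormedAddCommGroup X] [MeasurableSpace X]
    {S : Set X} {P : Measure S} {s₀ s N : ℝ} (hP : HasGrowthOrder S P s₀) (hs₀ : 0 ≤ s₀)
    (hs : s₀ < s) (hN : 0 < N)
    (E : (R : ℕ) → S → (Fin R → Bool)) (D : (R : ℕ) → (Fin R → Bool) → X) :
    P {x : S | ∀ R : ℕ, 0 < R → (R : ℝ) ^ s * ‖(x : X) - D R (E R x)‖ ≤ N} = 0 := by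
  obtain ⟨t, ht₀, hts⟩ := exists_between hs
  have ht : 0 < t := hs₀.trans_lt ht₀
  obtain ⟨ε₀, c, hε₀, hc, hball⟩ := hP t ht₀
  have hlim := ENNReal.tendsto_ofReal (tendsto_two_rpow_sub_mul_rpow
    (mul_pos hc (Real.rpow_pos_of_pos hN (-1 / t))) ((one_lt_div ht).2 hts))
  rw [ENNReal.ofReal_zero] at hlim
  have hradius : Tendsto (fun R : ℕ => N * (R : ℝ) ^ (-s)) atTop (𝓝 0) := by
    simpa using ((tendsto_rpow_neg_atTop (ht.trans hts)).comp
      tendsto_natCast_atTop_atTop).const_mul N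
  refine le_antisymm (ge_of_tendsto hlim ?_) zero_le
  filter_upwards [eventually_gt_atTop 0, hradius.eventually (gt_mem_nhds hε₀)] with R hR hsmall
  have hR' : (0 : ℝ) < R := Nat.cast_pos.2 hR
  have hpos : 0 < N * (R : ℝ) ^ (-s) := by positivity
  refine (measure_le_two_pow_mul_of_codec P (E R) (D R) (fun x hx => ?_)
    (fun x => hball x _ hpos hsmall)).trans_eq ?_
  · rw [Real.rpow_neg hR'.le, ← div_eq_mul_inv, le_div_iff₀' (by positivity)]
    exact hx R hR
  · have hrad : (N * (R : ℝ) ^ (-s)) ^ (-1 / t) = N ^ (-1 / t) * (R : ℝ) ^ (s / t) := by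
      rw [Real.mul_rpow hN.le (by positivity), ← Real.rpow_mul hR'.le]
      congr 2
      ring
    rw [hrad, ← mul_assoc, sub_eq_add_neg, Real.rpow_add two_pos, Real.rpow_natCast,
      ENNReal.ofReal_mul (by positivity), ENNReal.ofReal_pow two_pos.le, ENNReal.ofReal_ofNat]

theorem statement5 {X : Type*} [NormedAddCommGroup X] [NormedSpace ℝ X] [CompleteSpace X]
    [MeasurableSpace X] [BorelSpace X]
    (S : Set X) (P : Measure S) [IsProbabilityMeasure P]
    (s₀ : ℝ) (hs₀ : 0 ≤ s₀) (hP : HasGrowthOrder S P s₀)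
    (s : ℝ) (hs : s₀ < s)
    (E : (R : ℕ) → S → (Fin R → Bool)) (D : (R : ℕ) → (Fin R → Bool) → X) :
    P (approxClass S E D s) = 0 := by
  have hsub : approxClass S E D s ⊆ ⋃ n : ℕ,
      {x : S | ∀ R : ℕ, 0 < R → (R : ℝ) ^ s * ‖(x : X) - D R (E R x)‖ ≤ (n : ℝ) + 1} := by
    rintro x ⟨K, hK⟩
    obtain ⟨n, hn⟩ := exists_nat_ge K
    exact mem_iUnion.2 ⟨n, fun R hR => (hK R hR).trans (by linarith)⟩
  exact measure_mono_null hsub (measure_iUnion_null fun n =>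
    hP.measure_eq_zero_of_bound hs₀ hs n.cast_add_one_pos E D)
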